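/- arXiv:2302.07066 — 2 statements merged into one kernel-verified Lean document; each statement's English description precedes it below -/
import Mathlib

section
/- Let f : [0,1] → ℝ be quasi-continuous at every point of [0,1]. Then for every x ∈ [0,1], f is continuous at x relative to [0,1] (i.e., ContinuousWithinAt f [0,1] x) if and only if for every m ∈ ℕ there exists N ∈ ℕ such that |f(q) - f(r)| ≤ 2^{-m} for all rationals q, r ∈ [0,1] with |q - x| < 2^{-N} and |r - x| < 2^{-N}. -/
/-- `f` is quasi-continuous at `x₀ ∈ [0,1]` (subspace topology of `[0,1]`). -/
def QuasiContinuousAt (f : ℝ → ℝ) (x₀ : ℝ) : Prop :=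
  ∀ ε > (0:ℝ), ∀ U : Set ℝ, U ⊆ Set.Icc 0 1 → x₀ ∈ U →
    IsOpen (Subtype.val ⁻¹' U : Set (Set.Icc (0:ℝ) 1)) →
    ∃ G : Set ℝ, G.Nonempty ∧ G ⊆ U ∧
      IsOpen (Subtype.val ⁻¹' G : Set (Set.Icc (0:ℝ) 1)) ∧
      ∀ x ∈ G, |f x - f x₀| < ε

/-
Quasi-continuity at `y` makes `f y` a cluster point of the values of `f` along any dense set `t`
near `y`. At `x` itself, this turns the Cauchy condition along `t` into convergence to `f x`. At
the points `y` near `x`, it places `f y` in every closed neighbourhood of `f x` that contains the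
values of `f` on `t` near `x`.
-/

open Filter Set Topology

section Topological

variable {X Y : Type*} [TopologicalSpace X]

/-- Quasi-continuity of `f : X → Y` at `x` relative to `s`: in every neighbourhood of `x` within
`s` there is a point `y`, possibly different from `x`, near which the values of `f` on `s` are
close to `f x`. The nonempty relatively open set of the usual definition is encoded by the filter
`𝓝[s] y`. -/
def QuasiContinuousWithinAt [TopologicalSpace Y] (f : X → Y) (s : Set X) (x : X) : Prop :=
  ∀ V ∈ 𝓝 (f x), ∃ᶠ y in 𝓝[s] x, ∀ᶠ z in 𝓝[s] y, f z ∈ V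

theorem subset_closure_inter_of_dense {s d : Set X} (hs : s ⊆ closure (interior s))
    (hd : Dense d) : s ⊆ closure (s ∩ d) :=
  hs.trans <| closure_minimal ((hd.open_subset_closure_inter isOpen_interior).trans <|
    closure_mono <| inter_subset_inter_left d interior_subset) isClosed_closure

variable {f : X → Y} {s t : Set X} {x : X}

theorem QuasiContinuousWithinAt.mapClusterPt [TopologicalSpace Y]
    (hf : QuasiContinuousWithinAt f s x) (hts : t ⊆ s) (hst : s ⊆ closure t) :
    MapClusterPt (f x) (𝓝[t] x) f := by
  refine mapClusterPt_iff_frequently.2 fun V hV havoid ↦ ?_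
  have havoid_near : ∀ᶠ y in 𝓝[s] x, ∀ᶠ z in 𝓝[t] y, f z ∉ V :=
    (eventually_nhds_nhdsWithin.2 havoid).filter_mono nhdsWithin_le_nhds
  obtain ⟨y, hyV, hys, hyavoid⟩ :=
    ((hf V hV).and_eventually (eventually_mem_nhdsWithin.and havoid_near)).exists
  have : (𝓝[t] y).NeBot := mem_closure_iff_nhdsWithin_neBot.1 (hst hys)
  obtain ⟨z, hz, hz'⟩ := ((hyV.filter_mono (nhdsWithin_mono y hts)).and hyavoid).exists
  exact hz' hz

theorem tendsto_nhdsWithin_of_mapClusterPt [TopologicalSpace Y] [RegularSpace Y] {b : Y}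
    (hf : ∀ᶠ y in 𝓝[s] x, MapClusterPt (f y) (𝓝[t] y) f) (hb : Tendsto f (𝓝[t] x) (𝓝 b)) :
    Tendsto f (𝓝[s] x) (𝓝 b) := by
  refine (closed_nhds_basis b).tendsto_right_iff.2 fun V ⟨hV, hVclosed⟩ ↦ ?_
  have hV_near : ∀ᶠ y in 𝓝[s] x, ∀ᶠ z in 𝓝[t] y, f z ∈ V :=
    (eventually_nhds_nhdsWithin.2 (hb hV)).filter_mono nhdsWithin_le_nhds
  filter_upwards [hf, hV_near] with y hy hyV
  exact hVclosed.mem_of_mapClusterPt hy hyV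

theorem quasi_continuous_continuity_via_rationals_general [UniformSpace Y] (hts : t ⊆ s)
    (hst : s ⊆ closure t) (hx : x ∈ s) (hf : ∀ᶠ y in 𝓝[s] x, QuasiContinuousWithinAt f s y) :
    ContinuousWithinAt f s x ↔ Cauchy (map f (𝓝[t] x)) := by
  have : (𝓝[t] x).NeBot := mem_closure_iff_nhdsWithin_neBot.1 (hst hx)
  refine ⟨fun hc ↦ (hc.mono hts).cauchy_map, fun hcauchy ↦ ?_⟩
  have hcluster : ∀ᶠ y in 𝓝[s] x, MapClusterPt (f y) (𝓝[t] y) f :=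
    hf.mono fun y hy ↦ hy.mapClusterPt hts hst
  have htendsto : Tendsto f (𝓝[t] x) (𝓝 (f x)) :=
    le_nhds_of_cauchy_adhp hcauchy (hcluster.self_of_nhdsWithin hx)
  exact tendsto_nhdsWithin_of_mapClusterPt hcluster htendsto

end Topological

theorem cauchy_map_nhdsWithin_inter_range_iff {ι X Y : Type*} [PseudoMetricSpace X]
    [PseudoMetricSpace Y] {f : X → Y} {s : Set X} {e : ι → X} {x : X}
    (hx : x ∈ closure (s ∩ range e)) {ρ : ℝ} (hρ₀ : 0 < ρ) (hρ₁ : ρ < 1) :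
    Cauchy (map f (𝓝[s ∩ range e] x)) ↔
      ∀ m : ℕ, ∃ N : ℕ, ∀ i j, e i ∈ s → e j ∈ s →
        dist (e i) x < ρ ^ N → dist (e j) x < ρ ^ N → dist (f (e i)) (f (e j)) ≤ ρ ^ m := by
  have hnhds := nhdsWithin_hasBasis (Metric.nhds_basis_ball_pow (x := x) hρ₀ hρ₁) (s ∩ range e)
  rw [cauchy_map_iff, and_iff_right (mem_closure_iff_nhdsWithin_neBot.1 hx),
    hnhds.prod_self.tendsto_iff (Metric.uniformity_basis_dist_le_pow hρ₀ hρ₁)]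
  simp only [true_and, forall_const]
  refine forall_congr' fun m ↦ exists_congr fun N ↦ ⟨fun h i j hi hj hix hjx ↦ ?_, ?_⟩
  · exact h (e i, e j) ⟨⟨hix, hi, i, rfl⟩, ⟨hjx, hj, j, rfl⟩⟩
  · rintro h ⟨_, _⟩ ⟨⟨hix, hi, i, rfl⟩, ⟨hjx, hj, j, rfl⟩⟩
    exact h i j hi hj hix hjx

theorem QuasiContinuousAt.quasiContinuousWithinAt {f : ℝ → ℝ} {x : ℝ}
    (hf : QuasiContinuousAt f x) (hx : x ∈ Icc (0 : ℝ) 1) :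
    QuasiContinuousWithinAt f (Icc 0 1) x := by
  refine fun V hV ↦ frequently_iff.2 fun {U} hU ↦ ?_
  obtain ⟨ε, hε, hεV⟩ := Metric.mem_nhds_iff.1 hV
  obtain ⟨W, hW, hxW, hWU⟩ := mem_nhdsWithin.1 hU
  have hopen : IsOpen (Subtype.val ⁻¹' (W ∩ Icc 0 1) : Set (Icc (0 : ℝ) 1)) := by
    simpa using hW.preimage continuous_subtype_val
  obtain ⟨G, ⟨y, hy⟩, hGW, hG, hGf⟩ := hf ε hε (W ∩ Icc 0 1) inter_subset_right ⟨hxW, hx⟩ hopen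
  have hG_nhds : G ∈ 𝓝[Icc 0 1] y :=
    preimage_coe_mem_nhds_subtype.1 (hG.mem_nhds (x := ⟨y, (hGW hy).2⟩) hy)
  exact ⟨y, hWU (hGW hy), mem_of_superset hG_nhds fun z hz ↦ hεV (hGf z hz)⟩

theorem Icc_subset_closure_inter_range_ratCast {a b : ℝ} (hab : a ≠ b) :
    Icc a b ⊆ closure (Icc a b ∩ range ((↑) : ℚ → ℝ)) :=
  subset_closure_inter_of_dense (by rw [interior_Icc, closure_Ioo hab]) Rat.denseRange_cast

theorem quasi_continuous_continuity_via_rationals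
    (f : ℝ → ℝ) (hf : ∀ x ∈ Set.Icc (0:ℝ) 1, QuasiContinuousAt f x) :
    ∀ x ∈ Set.Icc (0:ℝ) 1,
      (ContinuousWithinAt f (Set.Icc 0 1) x ↔
        ∀ m : ℕ, ∃ N : ℕ, ∀ q r : ℚ,
          (q:ℝ) ∈ Set.Icc (0:ℝ) 1 → (r:ℝ) ∈ Set.Icc (0:ℝ) 1 →
          |(q:ℝ) - x| < (2:ℝ) ^ (-(N:ℤ)) → |(r:ℝ) - x| < (2:ℝ) ^ (-(N:ℤ)) →
          |f q - f r| ≤ (2:ℝ) ^ (-(m:ℤ))) := by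
  intro x hx
  have hdense := Icc_subset_closure_inter_range_ratCast zero_ne_one
  rw [quasi_continuous_continuity_via_rationals_general inter_subset_left hdense hx
      (eventually_mem_nhdsWithin.mono fun y hy ↦ (hf y hy).quasiContinuousWithinAt hy),
    cauchy_map_nhdsWithin_inter_range_iff (hdense hx) (ρ := 2⁻¹) (by norm_num) (by norm_num)]
  simp only [Real.dist_eq, zpow_neg, zpow_natCast, inv_pow]
end

section
/- Let A ⊆ [0,1], let Y : [0,1] → ℕ be injective on A, and let f : [0,1] → ℝ be given by f(x) = 2^{-(Y(x)+1)} if x ∈ A and f(x) = 0 otherwise. Then f is upper semicontinuous on [0,1], i.e., UpperSemicontinuousOn f [0,1]. -/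
/-!
An injection into `ℕ` takes each value at most once, so `f` exceeds any given positive level at only
finitely many points. Thus `f` tends to its lower bound `0` along the cofinite filter, and in a
T₁ space every point has a punctured neighbourhood avoiding any given finite set.
-/

open Filter Set Topology

section Cofinite

variable {X ι β : Type*} {s A : Set X} {Y : X → ι}

theorem tendsto_cofinite_inf_principal_of_injOn (hY : InjOn Y s) :
    Tendsto Y (cofinite ⊓ 𝓟 s) cofinite := by
  refine le_cofinite_iff_eventually_ne.mpr fun i ↦ ?_
  have fiber_subsingleton : (s ∩ Y ⁻¹' {i}).Subsingleton := fun x hx z hz ↦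
    hY hx.1 hz.1 (hx.2.trans hz.2.symm)
  refine eventually_inf_principal.mpr ?_
  filter_upwards [fiber_subsingleton.finite.eventually_cofinite_notMem] with x hx hxs hxi
  exact hx ⟨hxs, hxi⟩

theorem tendsto_cofinite_inf_principal_ite_of_injOn [TopologicalSpace β] [DecidablePred (· ∈ A)]
    (hY : InjOn Y (s ∩ A)) {a : ι → β} {b : β} (ha : Tendsto a cofinite (𝓝 b)) :
    Tendsto (fun x ↦ if x ∈ A then a (Y x) else b) (cofinite ⊓ 𝓟 s) (𝓝 b) := by
  refine Tendsto.if ?_ tendsto_const_nhds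
  rw [inf_assoc, inf_principal]
  exact ha.comp (tendsto_cofinite_inf_principal_of_injOn hY)

theorem upperSemicontinuousOn_of_tendsto_cofinite [TopologicalSpace X] [T1Space X]
    [TopologicalSpace β] [LinearOrder β] [ClosedIciTopology β] {f : X → β} {b : β}
    (hlim : Tendsto f (cofinite ⊓ 𝓟 s) (𝓝 b)) (hb : ∀ x ∈ s, b ≤ f x) :
    UpperSemicontinuousOn f s := by
  intro x hx y hy
  have lt_cofinitely : ∀ᶠ z in cofinite, z ∈ s → f z < y :=
    eventually_inf_principal.mp (hlim.eventually_lt_const ((hb x hx).trans_lt hy))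
  have lt_punctured : ∀ᶠ z in 𝓝[≠] x, z ∈ s → f z < y :=
    lt_cofinitely.filter_mono (nhdsNE_le_cofinite x)
  refine eventually_nhdsWithin_iff.mpr ?_
  filter_upwards [eventually_nhdsWithin_iff.mp lt_punctured] with z hz hzs
  obtain rfl | hne := eq_or_ne z x
  · exact hy
  · exact hz hne hzs

theorem injection_indicator_upperSemicontinuousOn_general [TopologicalSpace X] [T1Space X]
    [TopologicalSpace β] [LinearOrder β] [ClosedIciTopology β] [DecidablePred (· ∈ A)]
    (hY : InjOn Y (s ∩ A)) {a : ι → β} {b : β} (ha : Tendsto a cofinite (𝓝 b))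
    (hb : ∀ i, b ≤ a i) {f : X → β} (hf : ∀ x ∈ s, f x = if x ∈ A then a (Y x) else b) :
    UpperSemicontinuousOn f s := by
  have hlim : Tendsto f (cofinite ⊓ 𝓟 s) (𝓝 b) :=
    (tendsto_cofinite_inf_principal_ite_of_injOn hY ha).congr'
      (eventually_inf_principal.mpr (.of_forall fun x hx ↦ (hf x hx).symm))
  refine upperSemicontinuousOn_of_tendsto_cofinite hlim fun x hx ↦ ?_
  rw [hf x hx]
  split_ifs
  exacts [hb _, le_rfl]

end Cofinite

theorem tendsto_zpow_neg_natCast_add_one {𝕜 : Type*} [Field 𝕜] [LinearOrder 𝕜]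
    [IsStrictOrderedRing 𝕜] [Archimedean 𝕜] [TopologicalSpace 𝕜] [OrderTopology 𝕜]
    {r : 𝕜} (hr : 1 < r) : Tendsto (fun n : ℕ ↦ r ^ (-(n + 1 : ℤ))) atTop (𝓝 0) := by
  have hpow : Tendsto (fun n : ℕ ↦ r⁻¹ ^ (n + 1)) atTop (𝓝 0) :=
    (tendsto_pow_atTop_nhds_zero_of_lt_one (inv_nonneg.mpr (zero_le_one.trans hr.le))
      (inv_lt_one_of_one_lt₀ hr)).comp (tendsto_add_atTop_nat 1)
  refine hpow.congr fun n ↦ ?_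
  rw [zpow_neg, ← Nat.cast_add_one, zpow_natCast, inv_pow]

open Classical in
theorem injection_indicator_upperSemicontinuousOn
    (A : Set ℝ) (hA : A ⊆ Set.Icc 0 1)
    (Y : ℝ → ℕ) (hY : Set.InjOn Y A)
    (f : ℝ → ℝ)
    (hf : ∀ x ∈ Set.Icc (0:ℝ) 1,
      f x = if x ∈ A then (2:ℝ) ^ (-(Y x + 1 : ℤ)) else 0) :
    UpperSemicontinuousOn f (Set.Icc 0 1) :=
  injection_indicator_upperSemicontinuousOn_general (hY.mono inter_subset_right)
    (Nat.cofinite_eq_atTop ▸ tendsto_zpow_neg_natCast_add_one one_lt_two)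
    (fun _ ↦ zpow_nonneg zero_le_two _) hf
end
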